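/- arXiv:2308.04191 — 5 statements merged into one kernel-verified Lean document; each statement's English description precedes it below -/
import Mathlib

section
/- Let n be a natural number and let F ∈ ℂ[x₁,…,xₙ] be a degenerate polynomial. Then there exists a constant C > 0 depending only on F such that for every real K ≥ 1 and every finite non-empty set A ⊆ ℂ∖{0} satisfying |A·A| ≤ K|A|, one has |F(A,…,A)| ≤ C · K^C · |A|^{n−1}. -/
open MvPolynomial Pointwise

open scoped Classical

/-- The set of exponent vectors of monomials of `F`, viewed inside `ℚⁿ`. -/
noncomputable def expVecs {n : ℕ} (F : MvPolynomial (Fin n) ℂ) : Set (Fin n → ℚ) :=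
  (fun (m : Fin n →₀ ℕ) (i : Fin n) => (m i : ℚ)) '' (F.support : Set (Fin n →₀ ℕ))

/-- `d(F)`: the dimension of the `ℚ`-linear span of the exponent vectors of `F`. -/
noncomputable def dF {n : ℕ} (F : MvPolynomial (Fin n) ℂ) : ℕ :=
  Module.finrank ℚ (Submodule.span ℚ (expVecs F))

/-- `F(A, …, A)`, the image of the grid `Aⁿ` under `F`. -/
noncomputable def polyImage {n : ℕ} (F : MvPolynomial (Fin n) ℂ) (A : Finset ℂ) : Finset ℂ :=
  (Fintype.piFinset fun _ : Fin n => A).image fun a => eval a F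

/-!
The exponent vectors of `F` generate a lattice of rank `d(F)`. If `w₁, …, w_d` is a basis of it,
every monomial of `F` is a product of integer powers of the Laurent monomials `a ^ w₁, …, a ^ w_d`
at invertible `a`, so these `d(F)` values determine `F(a)`. Each `a ^ w` with coordinates of `a` in
`A` lies in `A ^ p / A ^ q`, where `p + q = ∑ |wᵢ|`, and the Plünnecke–Ruzsa inequality bounds this
set by `K ^ (p + q) |A|` when `|A * A| ≤ K |A|`. Hence `|F(A, …, A)| ≤ K ^ C |A| ^ d(F)`.
-/

theorem prod_pow_mem_pow_sum {σ M : Type*} [Fintype σ] [CommMonoid M] [DecidableEq M]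
    {S : Finset M} {a : σ → M} (ha : ∀ i, a i ∈ S) (e : σ → ℕ) :
    ∏ i, a i ^ e i ∈ S ^ ∑ i, e i := by
  rw [← Finset.mem_coe, Finset.coe_pow, ← Finset.prod_pow_eq_pow_sum]
  exact Set.finsetProd_mem_finsetProd _ _ _ fun i _ =>
    Set.pow_mem_pow (Finset.mem_coe.2 (ha i))

section LaurentMonomials

variable {σ G : Type*} [Fintype σ] [CommGroup G]

/-- The Laurent monomial `a ^ w` with integer exponent vector `w`, at a point `a` with coordinates
in a commutative group. -/
def laurentMonomial (a : σ → G) (w : σ → ℤ) : G :=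
  ∏ i, a i ^ w i

theorem laurentMonomial_eq_linearCombination (a : σ → G) (w : σ → ℤ) :
    laurentMonomial a w =
      (Fintype.linearCombination ℤ (fun i => Additive.ofMul (a i)) w).toMul := by
  simp only [laurentMonomial, Fintype.linearCombination_apply, toMul_sum, toMul_zsmul,
    toMul_ofMul]

theorem eqOn_laurentMonomial_span {a b : σ → G} {s : Set (σ → ℤ)}
    (h : s.EqOn (laurentMonomial a) (laurentMonomial b)) :
    Set.EqOn (laurentMonomial a) (laurentMonomial b) (Submodule.span ℤ s) := by
  simp only [Set.EqOn, laurentMonomial_eq_linearCombination, EmbeddingLike.apply_eq_iff_eq] at h ⊢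
  exact LinearMap.eqOn_span' h

variable [DecidableEq G]

theorem laurentMonomial_mem_pow_div_pow {S : Finset G} {a : σ → G} (ha : ∀ i, a i ∈ S)
    (w : σ → ℤ) :
    laurentMonomial a w ∈ S ^ (∑ i, (w i).toNat) / S ^ ∑ i, (-w i).toNat := by
  have hw : laurentMonomial a w = (∏ i, a i ^ (w i).toNat) / ∏ i, a i ^ (-w i).toNat := by
    rw [← Finset.prod_div_distrib]
    refine Finset.prod_congr rfl fun i _ => ?_
    rw [← zpow_natCast, ← zpow_natCast, div_eq_mul_inv, ← zpow_sub, Int.toNat_sub_toNat_neg]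
  rw [hw]
  exact Finset.div_mem_div (prod_pow_mem_pow_sum ha _) (prod_pow_mem_pow_sum ha _)

variable [DecidableEq σ]

theorem card_image_laurentMonomial_le {S : Finset G} (hS : S.Nonempty) (w : σ → ℤ) :
    (((Fintype.piFinset fun _ => S).image (laurentMonomial · w)).card : ℚ≥0) ≤
      S.mulConst S ^ (∑ i, (w i).natAbs) * S.card := by
  have hsub : (Fintype.piFinset fun _ => S).image (laurentMonomial · w) ⊆
      S ^ (∑ i, (w i).toNat) / S ^ ∑ i, (-w i).toNat :=
    Finset.image_subset_iff.2 fun a ha =>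
      laurentMonomial_mem_pow_div_pow (Fintype.mem_piFinset.1 ha) w
  have hexp : ∑ i, (w i).natAbs = ∑ i, (w i).toNat + ∑ i, (-w i).toNat := by
    simp only [← Finset.sum_add_distrib, Int.toNat_add_toNat_neg_eq_natAbs]
  rw [hexp]
  exact (Nat.cast_le.2 (Finset.card_le_card hsub)).trans
    (Finset.pluennecke_ruzsa_inequality_pow_div_pow_mul hS S _ _)

end LaurentMonomials

theorem finrank_span_intCast_image {σ : Type*} [Finite σ] (s : Set (σ → ℤ)) :
    Module.finrank ℚ (Submodule.span ℚ ((fun v i => (v i : ℚ)) '' s)) =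
      Module.finrank ℤ (Submodule.span ℤ s) := by
  let cast : (σ → ℤ) →ₗ[ℤ] (σ → ℚ) := (Algebra.linearMap ℤ ℚ).compLeft σ
  have cast_injective : Function.Injective cast :=
    Function.Injective.comp_left (g := Int.cast) Int.cast_injective
  have hmap : (Submodule.span ℤ s).map cast = Submodule.span ℤ (cast '' s) :=
    Submodule.map_span cast s
  have : Module.Finite ℤ (Submodule.span ℤ (cast '' s)) := by
    rw [← hmap]
    infer_instance
  calc Module.finrank ℚ (Submodule.span ℚ (cast '' s))
      = Module.finrank ℤ (Submodule.span ℤ (cast '' s)) :=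
        Submodule.finrank_span_eq_finrank_span ℤ _ _
    _ = Module.finrank ℤ (Submodule.span ℤ s) := by
        rw [← hmap]
        exact (Submodule.equivMapOfInjective cast cast_injective _).finrank_eq.symm

section PolynomialImages

variable {σ R : Type*} [CommSemiring R]

/-- The exponent vectors of the monomials of `F`, with integer rather than natural entries, so that
they generate a sublattice of `ℤ^σ`. -/
def intExponents (F : MvPolynomial σ R) : Set (σ → ℤ) :=
  (fun m i => (m i : ℤ)) '' (F.support : Set (σ →₀ ℕ))

/-- The dimension `d(F)` of the `ℚ`-span of the exponent vectors of `F`, over any commutative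
semiring of coefficients; over `ℂ` and `Fin n` it unfolds to the same term as `dF F`. -/
noncomputable def exponentRank (F : MvPolynomial σ R) : ℕ :=
  Module.finrank ℚ (Submodule.span ℚ
    ((fun (m : σ →₀ ℕ) (i : σ) => (m i : ℚ)) '' (F.support : Set (σ →₀ ℕ))))

theorem exponentRank_eq_finrank_span_intExponents [Finite σ] (F : MvPolynomial σ R) :
    exponentRank F = Module.finrank ℤ (Submodule.span ℤ (intExponents F)) := by
  rw [← finrank_span_intCast_image, intExponents, Set.image_image]
  rfl

variable [Fintype σ]

theorem eval_units_eq_of_eqOn_laurentMonomial {F : MvPolynomial σ R} {a b : σ → Rˣ}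
    (h : (intExponents F).EqOn (laurentMonomial a) (laurentMonomial b)) :
    eval (fun i => (a i : R)) F = eval (fun i => (b i : R)) F := by
  have eval_monomial (c : σ → Rˣ) (m : σ →₀ ℕ) :
      ∏ i, (c i : R) ^ m i = laurentMonomial c fun i => (m i : ℤ) := by
    simp only [laurentMonomial, zpow_natCast, Units.coe_prod, Units.val_pow_eq_pow_val]
  simp only [eval_eq', eval_monomial]
  exact Finset.sum_congr rfl fun m hm => by rw [h ⟨m, hm, rfl⟩]

variable [DecidableEq σ] [DecidableEq R]

theorem card_image_eval_units_le_prod {ι : Type*} [Fintype ι] {F : MvPolynomial σ R}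
    {w : ι → σ → ℤ}
    (hw : intExponents F ⊆ Submodule.span ℤ (Set.range w)) (S : Finset Rˣ) :
    ((Fintype.piFinset fun _ => S).image fun a => eval (fun i => (a i : R)) F).card ≤
      ∏ k, ((Fintype.piFinset fun _ => S).image (laurentMonomial · (w k))).card := by
  let grid : Finset (σ → Rˣ) := Fintype.piFinset fun _ => S
  let evalF : (σ → Rˣ) → R := fun a => eval (fun i => (a i : R)) F
  let coords : (σ → Rˣ) → ι → Rˣ := fun a k => laurentMonomial a (w k)
  have hfactor : evalF.FactorsThrough coords := fun a b hab =>
    eval_units_eq_of_eqOn_laurentMonomial <|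
      (eqOn_laurentMonomial_span (Set.forall_mem_range.2 (congrFun hab))).mono hw
  have hcoords : grid.image coords ⊆
      Fintype.piFinset fun k => grid.image (laurentMonomial · (w k)) :=
    Finset.image_subset_iff.2 fun a ha =>
      Fintype.mem_piFinset.2 fun k => Finset.mem_image_of_mem (laurentMonomial · (w k)) ha
  calc (grid.image evalF).card
      = ((grid.image coords).image (coords.extend evalF 0)).card := by
        rw [Finset.image_image, hfactor.extend_comp]
    _ ≤ (grid.image coords).card := Finset.card_image_le
    _ ≤ (Fintype.piFinset fun k => grid.image (laurentMonomial · (w k))).card :=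
        Finset.card_le_card hcoords
    _ = ∏ k, (grid.image (laurentMonomial · (w k))).card := Fintype.card_piFinset _

theorem exists_card_image_eval_units_le (F : MvPolynomial σ R) :
    ∃ C : ℕ, ∀ S : Finset Rˣ, S.Nonempty →
      (((Fintype.piFinset fun _ => S).image fun a => eval (fun i => (a i : R)) F).card : ℚ≥0) ≤
        S.mulConst S ^ C * S.card ^ exponentRank F := by
  let L := Submodule.span ℤ (intExponents F)
  let w : Fin (Module.finrank ℤ L) → σ → ℤ := fun k => Module.finBasis ℤ L k
  have hw : intExponents F ⊆ Submodule.span ℤ (Set.range w) := by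
    have hspan : Submodule.span ℤ (Set.range w) = L := by
      rw [show w = L.subtype ∘ Module.finBasis ℤ L from rfl, Set.range_comp,
        ← Submodule.map_span, Module.Basis.span_eq, Submodule.map_top, Submodule.range_subtype]
    rw [hspan]
    exact Submodule.subset_span
  refine ⟨∑ k, ∑ i, (w k i).natAbs, fun S hS => ?_⟩
  calc (((Fintype.piFinset fun _ => S).image fun a => eval (fun i => (a i : R)) F).card : ℚ≥0)
      ≤ ∏ k, (((Fintype.piFinset fun _ => S).image (laurentMonomial · (w k))).card : ℚ≥0) :=
        mod_cast card_image_eval_units_le_prod hw S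
    _ ≤ ∏ k, (S.mulConst S ^ (∑ i, (w k i).natAbs) * S.card) :=
        Finset.prod_le_prod' fun k _ => card_image_laurentMonomial_le hS (w k)
    _ = S.mulConst S ^ (∑ k, ∑ i, (w k i).natAbs) * S.card ^ exponentRank F := by
        rw [Finset.prod_mul_distrib, Finset.prod_pow_eq_pow_sum, Finset.prod_const,
          Finset.card_univ, Fintype.card_fin, exponentRank_eq_finrank_span_intExponents]

theorem stmt1_general (F : MvPolynomial σ R) :
    ∃ C : ℝ, 0 < C ∧
      ∀ K : ℝ, 1 ≤ K → ∀ A : Finset R, A.Nonempty → (∀ a ∈ A, IsUnit a) →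
        ((A * A).card : ℝ) ≤ K * (A.card : ℝ) →
        (((Fintype.piFinset fun _ : σ => A).image fun a => eval a F).card : ℝ) ≤
          C * K ^ C * (A.card : ℝ) ^ exponentRank F := by
  obtain ⟨C, hC⟩ := exists_card_image_eval_units_le F
  refine ⟨(C + 1 : ℕ), by positivity, fun K hK A hA hunit hAA => ?_⟩
  lift A to Finset Rˣ using hunit
  have hS : A.Nonempty := Finset.image_nonempty.1 hA
  have hcard : (A.image Units.val).card = A.card :=
    Finset.card_image_of_injective A Units.val_injective
  have hdoubling : (A.mulConst A : ℝ) ≤ K := by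
    have hmul : (A * A).image Units.val = A.image Units.val * A.image Units.val :=
      Finset.image_mul (Units.coeHom R)
    rw [← hmul, Finset.card_image_of_injective _ Units.val_injective, hcard] at hAA
    rwa [Finset.cast_mulConst, div_le_iff₀ (mod_cast hS.card_pos)]
  have hgrid : (Fintype.piFinset fun _ : σ => A.image Units.val) =
      (Fintype.piFinset fun _ => A).image fun a i => (a i : R) :=
    Fintype.piFinset_image (fun _ => Units.val) fun _ => A
  rw [hgrid, Finset.image_image, hcard, Real.rpow_natCast]
  calc _ ≤ (A.mulConst A : ℝ) ^ C * (A.card : ℝ) ^ exponentRank F := mod_cast hC A hS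
    _ ≤ K ^ (C + 1) * (A.card : ℝ) ^ exponentRank F := by
        gcongr
        exact (pow_le_pow_left₀ (NNRat.cast_nonneg _) hdoubling C).trans
          (pow_le_pow_right₀ hK C.le_succ)
    _ ≤ (C + 1 : ℕ) * K ^ (C + 1) * (A.card : ℝ) ^ exponentRank F := by
        rw [mul_assoc]
        exact le_mul_of_one_le_left (by positivity) (mod_cast C.succ_pos)

end PolynomialImages

theorem stmt1 (n : ℕ) (F : MvPolynomial (Fin n) ℂ) (hdeg : dF F ≤ n - 1) :
    ∃ C : ℝ, 0 < C ∧
      ∀ K : ℝ, 1 ≤ K → ∀ A : Finset ℂ, A.Nonempty → (0 : ℂ) ∉ A →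
        ((A * A).card : ℝ) ≤ K * (A.card : ℝ) →
        ((polyImage F A).card : ℝ) ≤ C * K ^ C * (A.card : ℝ) ^ (n - 1) := by
  obtain ⟨C, hC, hbound⟩ := stmt1_general F
  refine ⟨C, hC, fun K hK A hA h0 hAA => ?_⟩
  have hunit : ∀ a ∈ A, IsUnit a := fun a ha => (ne_of_mem_of_not_mem ha h0).isUnit
  refine (hbound K hK A hA hunit hAA).trans ?_
  gcongr
  · exact mod_cast hA.card_pos
  · exact hdeg
end

section
/- Let n, κ be natural numbers, let z₁,…,zₙ ∈ ℤⁿ be vectors which form a basis of ℚⁿ and whose entries all have absolute value at most κ, and let t = (t₁,…,tₙ) ∈ (ℂ∖{0})ⁿ. Then there is a constant C depending only on κ and n such that for every finite set A ⊆ ℂ∖{0}, the number of tuples (a₁,…,aₙ) ∈ Aⁿ satisfying a₁^{z_{i,1}} ⋯ aₙ^{z_{i,n}} = t_i for every 1 ≤ i ≤ n is at most C. -/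
open scoped Classical

/-!
A tuple `a` of units is the same as the character `m ↦ ∏ j, a j ^ m j` of the lattice `ℤ^ι`, and
the equations `∏ j, a j ^ z i j = t i` prescribe this character on the sublattice `L` spanned by the
rows of `z`. By Dedekind's theorem, distinct characters that agree on `L` remain linearly
independent when restricted to representatives of `ℤ^ι / L`, so the number of solutions is at most
`[ℤ^ι : L] = |det z|`, which the Leibniz expansion bounds by `n! κ^n`.
-/

open Module
open scoped Nat

section Characters

theorem linearIndependent_addChar (A R : Type*) [AddMonoid A] [CommRing R] [IsDomain R] :
    LinearIndependent R ((⇑) : AddChar A R → A → R) :=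
  (linearIndependent_monoidHom (Multiplicative A) R).comp _ AddChar.toMonoidHomEquiv.injective

variable {A R : Type*} [AddGroup A] [CommRing R] [IsDomain R]

theorem linearIndependent_addChar_quotient_out {S : Set (AddChar A R)} {N : AddSubgroup A}
    (hS : ∀ ψ ∈ S, ∀ χ ∈ S, Set.EqOn ψ χ N) :
    LinearIndependent R fun (ψ : S) (q : A ⧸ N) => ψ.1 q.out := by
  obtain rfl | ⟨χ, hχ⟩ := S.eq_empty_or_nonempty
  · exact linearIndependent_empty_type
  -- The common restriction of `S` to `N` recovers each character from its values at the
  -- representatives `q.out`.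
  let extend : (A ⧸ N → R) →ₗ[R] A → R :=
    LinearMap.pi fun x => χ (-(x : A ⧸ N).out + x) • LinearMap.proj (x : A ⧸ N)
  have extend_restrict (ψ : S) : extend (fun q => ψ.1 q.out) = ψ.1 := by
    funext x
    have hx : -(x : A ⧸ N).out + x ∈ N := QuotientAddGroup.eq.mp (QuotientAddGroup.out_eq' _)
    calc χ (-(x : A ⧸ N).out + x) * ψ.1 (x : A ⧸ N).out
        = ψ.1 (x : A ⧸ N).out * ψ.1 (-(x : A ⧸ N).out + x) := by
          rw [hS χ hχ ψ ψ.2 hx, mul_comm]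
      _ = ψ.1 x := by rw [← AddChar.map_add_eq_mul, add_neg_cancel_left]
  refine .of_comp extend ?_
  simpa only [Function.comp_def, extend_restrict] using
    (linearIndependent_addChar A R).comp ((↑) : S → AddChar A R) Subtype.val_injective

theorem encard_addChar_le_index {S : Set (AddChar A R)} {N : AddSubgroup A} [N.FiniteIndex]
    (hS : ∀ ψ ∈ S, ∀ χ ∈ S, Set.EqOn ψ χ N) : S.encard ≤ N.index := by
  have := Fintype.ofFinite (A ⧸ N)
  have hli := linearIndependent_addChar_quotient_out hS
  have : Finite S := hli.finite
  have := Fintype.ofFinite S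
  rw [← Set.coe_fintypeCard, Nat.cast_le]
  calc Fintype.card S ≤ finrank R (A ⧸ N → R) := hli.fintype_card_le_finrank
    _ = N.index := by
      rw [finrank_fintype_fun_eq_card, ← Nat.card_eq_fintype_card, AddSubgroup.index]

theorem eqOn_addChar_closure {A M : Type*} [AddGroup A] [Monoid M] {ψ χ : AddChar A M} {s : Set A}
    (h : Set.EqOn ψ χ s) : Set.EqOn ψ χ (AddSubgroup.closure s) :=
  AddMonoidHom.eqOn_closure (f := ψ.toAddMonoidHom) (g := χ.toAddMonoidHom) h

end Characters

section Lattice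

variable {ι : Type*} [Fintype ι] [DecidableEq ι]

theorem index_closure_range_eq_natAbs_det {z : ι → ι → ℤ} (hz : (Matrix.of z).det ≠ 0) :
    (AddSubgroup.closure (Set.range z)).index = (Matrix.of z).det.natAbs := by
  have hli : LinearIndependent ℤ z := Matrix.linearIndependent_rows_of_det_ne_zero hz
  have hbasis : (fun i => (Basis.span hli i : ι → ℤ)) = z :=
    funext fun i => congrArg Subtype.val (Basis.span_apply hli i)
  rw [← Submodule.span_int_eq_addSubgroupClosure,
    AddSubgroup.index_eq_natAbs_det (Pi.basisFun ℤ ι) _ (Basis.span hli), hbasis,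
    Pi.basisFun_det_apply]

theorem det_ne_zero_of_linearIndependent_intCast {z : Matrix ι ι ℤ}
    (hz : LinearIndependent ℚ fun i j => (z i j : ℚ)) : z.det ≠ 0 := by
  have hdet : (z.map ((↑) : ℤ → ℚ)).det ≠ 0 :=
    Matrix.nonsingular_iff_det_ne_zero.mp (Matrix.linearIndependent_row_iff.mp hz)
  rwa [← Int.cast_det, Int.cast_ne_zero] at hdet

theorem natAbs_det_le {z : Matrix ι ι ℤ} {κ : ℕ} (hκ : ∀ i j, |z i j| ≤ κ) :
    z.det.natAbs ≤ (Fintype.card ι)! * κ ^ Fintype.card ι := by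
  have hdet := Matrix.det_le (abv := AbsoluteValue.abs) hκ
  rw [AbsoluteValue.abs_apply, Int.abs_eq_natAbs, nsmul_eq_mul] at hdet
  exact_mod_cast hdet

end Lattice

section Monomials

variable {ι R : Type*} [Fintype ι] [CommRing R]

/-- The evaluation of Laurent monomials at a tuple `a` of units, as a character of the lattice of
exponent vectors. It takes values in `R` rather than `Rˣ`, so that linear independence of such
characters makes sense. -/
def monomialChar (a : ι → Rˣ) : AddChar (ι → ℤ) R where
  toFun m := (∏ j, a j ^ m j : Rˣ)
  map_zero_eq_one' := by simp
  map_add_eq_mul' m m' := by simp [zpow_add, Finset.prod_mul_distrib]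

theorem monomialChar_apply (a : ι → Rˣ) (m : ι → ℤ) :
    monomialChar a m = (∏ j, a j ^ m j : Rˣ) := rfl

theorem monomialChar_single [DecidableEq ι] (a : ι → Rˣ) (j : ι) :
    monomialChar a (Pi.single j 1) = a j := by
  simp [monomialChar_apply, Pi.single_apply]

theorem monomialChar_injective : Function.Injective (monomialChar : (ι → Rˣ) → AddChar _ R) := by
  intro a b hab
  ext j
  rw [← monomialChar_single a, hab, monomialChar_single]

theorem encard_monomialChar_eq_le_natAbs_det [DecidableEq ι] [IsDomain R] {z : ι → ι → ℤ}
    (hz : (Matrix.of z).det ≠ 0) (t : ι → R) :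
    {a : ι → Rˣ | ∀ i, monomialChar a (z i) = t i}.encard ≤ (Matrix.of z).det.natAbs := by
  have hindex := index_closure_range_eq_natAbs_det hz
  have : (AddSubgroup.closure (Set.range z)).FiniteIndex :=
    ⟨by rwa [hindex, Int.natAbs_ne_zero]⟩
  rw [← monomialChar_injective.encard_image, ← hindex]
  apply encard_addChar_le_index
  rintro _ ⟨a, ha, rfl⟩ _ ⟨b, hb, rfl⟩
  apply eqOn_addChar_closure
  rintro _ ⟨i, rfl⟩
  exact (ha i).trans (hb i).symm

theorem setOf_prod_zpow_eq_units_image {K : Type*} [Field K] (z : ι → ι → ℤ) (t : ι → K) :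
    {a : ι → K | (∀ j, a j ≠ 0) ∧ ∀ i, ∏ j, a j ^ z i j = t i} =
      (fun u j => (u j : K)) '' {u : ι → Kˣ | ∀ i, monomialChar u (z i) = t i} := by
  ext a
  constructor
  · rintro ⟨ha, hat⟩
    refine ⟨fun j => Units.mk0 (a j) (ha j), fun i => ?_, rfl⟩
    simpa [monomialChar_apply] using hat i
  · rintro ⟨u, hu, rfl⟩
    refine ⟨fun j => (u j).ne_zero, fun i => ?_⟩
    simpa [monomialChar_apply] using hu i

end Monomials

theorem card_filter_piFinset_le_encard {ι α : Type*} [Fintype ι] [DecidableEq ι] {A : Finset α}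
    {x : α} (hx : x ∉ A) (p : (ι → α) → Prop) [DecidablePred p] :
    ((Fintype.piFinset fun _ => A).filter p).card ≤ {a | (∀ j, a j ≠ x) ∧ p a}.encard := by
  rw [← Set.encard_coe_eq_coe_finsetCard]
  refine Set.encard_le_encard fun a ha => ?_
  rw [Finset.mem_coe, Finset.mem_filter, Fintype.mem_piFinset] at ha
  exact ⟨fun j => ne_of_mem_of_not_mem (ha.1 j) hx, ha.2⟩

theorem stmt6_general {ι K : Type*} [Fintype ι] [Field K] {z : ι → ι → ℤ} {κ : ℕ}
    (hz : LinearIndependent ℚ fun i j => (z i j : ℚ)) (hκ : ∀ i j, |z i j| ≤ (κ : ℤ))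
    (t : ι → K) :
    {a : ι → K | (∀ j, a j ≠ 0) ∧ ∀ i, ∏ j, a j ^ z i j = t i}.encard ≤
      ((Fintype.card ι)! * κ ^ Fintype.card ι : ℕ) := by
  have hdet : (Matrix.of z).det ≠ 0 := det_ne_zero_of_linearIndependent_intCast hz
  rw [setOf_prod_zpow_eq_units_image]
  calc _ ≤ {u : ι → Kˣ | ∀ i, monomialChar u (z i) = t i}.encard := Set.encard_image_le _ _
    _ ≤ (Matrix.of z).det.natAbs := encard_monomialChar_eq_le_natAbs_det hdet t
    _ ≤ _ := Nat.cast_le.mpr (natAbs_det_le hκ)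

theorem stmt6 (n κ : ℕ) :
    ∃ C : ℕ, ∀ z : Fin n → Fin n → ℤ,
      LinearIndependent ℚ (fun i j => (z i j : ℚ)) →
      (∀ i j, |z i j| ≤ (κ : ℤ)) →
      ∀ t : Fin n → ℂ, (∀ i, t i ≠ 0) →
        ∀ A : Finset ℂ, (0 : ℂ) ∉ A →
          ((Fintype.piFinset fun _ : Fin n => A).filter
              fun a => ∀ i, ∏ j, a j ^ z i j = t i).card ≤ C :=
  ⟨_, fun _ hz hκ t _ _ hA =>
    Nat.cast_le.mp ((card_filter_piFinset_le_encard hA _).trans (stmt6_general hz hκ t))⟩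
end

section
/- Let d, N be natural numbers, let G = ℤ/Nℤ × ℤᵈ, and let X be a finite subset of G with 0 ∈ X such that X generates G as a group and |X+X| ≤ K|X| for some real K ≥ 1. Then d ≤ 16K. -/
open Pointwise

/-!
For a homomorphism `f` from the ambient group to a linearly ordered vector space, let `dim f(X)` be
the dimension of the affine span of `f(X)`. We have `(dim f(X) + 2) |X| ≤ 2 |X + X|` by induction
on `|X|`. Let `v` be the least element of `f(X)`, peel off the fibre `F` of `X` over `v` and call
the rest `X'`. If `Y` is the set of `y ∈ X` for which `v + f(y)` is not in `f(X') + f(X')`, then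
`F + Y` and `X' + X'` are disjoint. Since `v` is least, `f(Y)` affinely spans `f(X)`, whence
`|F + Y| ≥ (dim f(X) + 1) |F|`. This suffices if `v` lies in the affine span of `f(X')`; otherwise
the dimension drops by one, but then `Y = X` and `|F + Y| ≥ |X|` as well.

An abelian group `G` of finite rank maps to `ℚ ⊗ G`, which can be ordered lexicographically. The
image of a generating set spans `ℚ ⊗ G`, so its affine span has dimension at least `rank G - 1`.
-/

open Finset Module TensorProduct

theorem mem_affineSubspace_of_add_eq_add {k V : Type*} [Ring k] [AddCommGroup V] [Module k V]
    {s : AffineSubspace k V} {a b c d : V} (ha : a ∈ s) (hb : b ∈ s) (hc : c ∈ s)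
    (h : a + d = b + c) : d ∈ s := by
  obtain rfl : d = b - a + c := by grind
  simpa using s.smul_vsub_vadd_mem 1 hb ha hc

theorem image_filter_ne {α β : Type*} [DecidableEq β] (f : α → β) (s : Finset α) (b : β) :
    ({a ∈ s | f a ≠ b} : Finset α).image f = (s.image f).erase b := by
  rw [← filter_ne', filter_image]

section Fibers

variable {G V : Type*} [AddCommGroup G] [DecidableEq G] [AddCommGroup V] [DecidableEq V]

theorem card_mul_card_image_le_card_add (f : G →+ V) {F : Finset G} {v : V}
    (hF : ∀ x ∈ F, f x = v) (Y : Finset G) : #F * #(Y.image f) ≤ #(F + Y) := by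
  refine mul_card_image_le_card_of_maps_to (f := fun z ↦ f z - v) ?_ #F ?_
  · rintro _ hz
    obtain ⟨x, hx, y, hy, rfl⟩ := mem_add.1 hz
    simpa [hF x hx] using mem_image_of_mem f hy
  · rintro _ hb
    obtain ⟨y, hy, rfl⟩ := mem_image.1 hb
    refine card_le_card_of_injOn (· + y) (fun x hx ↦ ?_) (add_left_injective y).injOn
    simp [add_mem_add hx hy, hF x hx]

/-- The new summands of `A` at `v`: those `a ∈ A` for which `v + a` is not a sum of two elements of
`A \ {v}`. They govern how much the sumset grows when `v` is added to `A \ {v}`. -/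
def newSummands (A : Finset V) (v : V) : Finset V :=
  {a ∈ A | v + a ∉ A.erase v + A.erase v}

theorem card_fiber_add_newSummands_add_card_le (f : G →+ V) (X : Finset G) (v : V) :
    #({x ∈ X | f x = v} + {x ∈ X | f x ∈ newSummands (X.image f) v}) +
      #({x ∈ X | f x ≠ v} + {x ∈ X | f x ≠ v}) ≤ #(X + X) := by
  rw [← card_union_of_disjoint]
  · exact card_le_card (union_subset (add_subset_add (filter_subset _ _) (filter_subset _ _))
      (add_subset_add (filter_subset _ _) (filter_subset _ _)))
  refine disjoint_left.2 fun z hz hz' ↦ ?_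
  obtain ⟨x, hx, y, hy, rfl⟩ := mem_add.1 hz
  obtain ⟨b, hb, c, hc, hbc⟩ := mem_add.1 hz'
  have hsum : f b + f c = v + f y := by
    rw [← map_add, hbc, map_add, (mem_filter.1 hx).2]
  exact (mem_filter.1 (mem_filter.1 hy).2).2
    (image_filter_ne f X v ▸ hsum ▸ add_mem_add (mem_image_of_mem f hb) (mem_image_of_mem f hc))

end Fibers

section LinearOrder

variable {V : Type*} [LinearOrder V] {A : Finset V} {v : V}

theorem lt_of_isLeast_of_mem_erase (hv : IsLeast (A : Set V) v) {a : V} (ha : a ∈ A.erase v) :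
    v < a :=
  (hv.2 (mem_of_mem_erase ha)).lt_of_ne (ne_of_mem_erase ha).symm

variable [AddCommGroup V] [IsOrderedAddMonoid V]

theorem self_mem_newSummands (hv : IsLeast (A : Set V) v) : v ∈ newSummands A v := by
  refine mem_filter.2 ⟨hv.1, fun h ↦ ?_⟩
  obtain ⟨b, hb, c, hc, hbc⟩ := mem_add.1 h
  exact (add_lt_add (lt_of_isLeast_of_mem_erase hv hb) (lt_of_isLeast_of_mem_erase hv hc)).ne' hbc

variable (k : Type*) [DivisionRing k] [Module k V]

theorem subset_affineSpan_newSummands (hv : IsLeast (A : Set V) v) :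
    (A : Set V) ⊆ affineSpan k (newSummands A v : Set V) := by
  intro a ha
  refine (A.wellFoundedOn (r := (· < ·))).induction ha fun a ha ih ↦ ?_
  by_cases hnew : v + a ∈ A.erase v + A.erase v
  · obtain ⟨b, hb, c, hc, hbc⟩ := mem_add.1 hnew
    have hba : b < a := by grind [lt_of_isLeast_of_mem_erase hv hc]
    have hca : c < a := by grind [lt_of_isLeast_of_mem_erase hv hb]
    exact mem_affineSubspace_of_add_eq_add (mem_affineSpan k (self_mem_newSummands hv))
      (ih b (mem_of_mem_erase hb) hba) (ih c (mem_of_mem_erase hc) hca) hbc.symm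
  · exact mem_affineSpan k (mem_filter.2 ⟨ha, hnew⟩)

theorem finrank_vectorSpan_add_one_le_card_newSummands (hv : IsLeast (A : Set V) v) :
    finrank k (vectorSpan k (A : Set V)) + 1 ≤ #(newSummands A v) := by
  have hle : vectorSpan k (A : Set V) ≤ vectorSpan k (newSummands A v : Set V) := by
    rw [← direction_affineSpan, ← direction_affineSpan]
    exact AffineSubspace.direction_le (affineSpan_le.2 (subset_affineSpan_newSummands k hv))
  have := finiteDimensional_vectorSpan_of_finite k (newSummands A v).finite_toSet
  have : Nonempty (newSummands A v) := ⟨⟨v, self_mem_newSummands hv⟩⟩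
  calc finrank k (vectorSpan k (A : Set V)) + 1
      ≤ finrank k (vectorSpan k (newSummands A v : Set V)) + 1 := by
        gcongr; exact Submodule.finrank_mono hle
    _ ≤ #(newSummands A v) := by
        convert finrank_vectorSpan_range_add_one_le k ((↑) : newSummands A v → V) <;> simp

theorem newSummands_eq_self_of_notMem_affineSpan (hv : IsLeast (A : Set V) v)
    (hvA : v ∉ affineSpan k (A.erase v : Set V)) : newSummands A v = A := by
  refine filter_true_of_mem fun a ha hnew ↦ ?_
  have hav : a ≠ v := by
    rintro rfl
    exact (mem_filter.1 (self_mem_newSummands hv)).2 hnew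
  obtain ⟨b, hb, c, hc, hbc⟩ := mem_add.1 hnew
  exact hvA (mem_affineSubspace_of_add_eq_add (mem_affineSpan k (mem_erase.2 ⟨hav, ha⟩))
    (mem_affineSpan k hb) (mem_affineSpan k hc) (by rw [hbc, add_comm]))

variable {G : Type*} [AddCommGroup G] [DecidableEq G]

theorem card_fiber_mul_finrank_vectorSpan_add_one_le (f : G →+ V) (X : Finset G)
    (hv : IsLeast (X.image f : Set V) v) :
    #{x ∈ X | f x = v} * (finrank k (vectorSpan k (X.image f : Set V)) + 1) ≤
      #({x ∈ X | f x = v} + {x ∈ X | f x ∈ newSummands (X.image f) v}) := by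
  set F : Finset G := {x ∈ X | f x = v}
  set Y : Finset G := {x ∈ X | f x ∈ newSummands (X.image f) v}
  have hY : Y.image f = newSummands (X.image f) v := by grind [newSummands]
  calc #F * (finrank k (vectorSpan k (X.image f : Set V)) + 1)
      ≤ #F * #(newSummands (X.image f) v) := by
        gcongr; exact finrank_vectorSpan_add_one_le_card_newSummands k hv
    _ = #F * #(Y.image f) := by rw [hY]
    _ ≤ #(F + Y) := card_mul_card_image_le_card_add f (fun x hx ↦ (mem_filter.1 hx).2) Y

theorem finrank_vectorSpan_image_add_two_mul_card_le (f : G →+ V) (X : Finset G) :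
    (finrank k (vectorSpan k (X.image f : Set V)) + 2) * #X ≤ 2 * #(X + X) := by
  induction X using Finset.strongInduction with | H X ih
  obtain rfl | hX := X.eq_empty_or_nonempty
  · simp
  obtain ⟨v, hv⟩ : ∃ v, IsLeast (X.image f : Set V) v := ⟨_, isLeast_min' _ (hX.image f)⟩
  obtain ⟨x₀, hx₀, hx₀v⟩ := mem_image.1 hv.1
  have IH := ih {x ∈ X | f x ≠ v} (filter_ssubset.2 ⟨x₀, hx₀, by simpa⟩)
  rw [image_filter_ne] at IH
  have hpeel := card_fiber_add_newSummands_add_card_le f X v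
  have hfiber := card_fiber_mul_finrank_vectorSpan_add_one_le k f X hv
  have hcard : #{x ∈ X | f x = v} + #{x ∈ X | f x ≠ v} = #X :=
    card_filter_add_card_filter_not _
  have hinsert : (X.image f : Set V) = insert v ((X.image f).erase v : Set V) := by
    rw [← coe_insert, insert_erase hv.1]
  set F : Finset G := {x ∈ X | f x = v}
  set X' : Finset G := {x ∈ X | f x ≠ v}
  set Y : Finset G := {x ∈ X | f x ∈ newSummands (X.image f) v} with hY
  set D := finrank k (vectorSpan k (X.image f : Set V)) with hD
  set D' := finrank k (vectorSpan k ((X.image f).erase v : Set V))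
  by_cases hvA : v ∈ affineSpan k ((X.image f).erase v : Set V)
  · have hdim : D = D' := by rw [hD, hinsert, vectorSpan_insert_eq_vectorSpan hvA]
    calc (D + 2) * #X = (D + 2) * #F + (D' + 2) * #X' := by rw [← hcard, mul_add, ← hdim]
      _ ≤ 2 * (#F * (D + 1)) + 2 * #(X' + X') := add_le_add (by linarith [Nat.zero_le (#F * D)]) IH
      _ ≤ 2 * #(X + X) := by linarith
  · have hYX : Y = X := by
      rw [hY, newSummands_eq_self_of_notMem_affineSpan k hv hvA]
      exact filter_true_of_mem fun x hx ↦ mem_image_of_mem f hx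
    have hle : #X ≤ #(F + Y) := hYX ▸ card_le_card_add_left ⟨x₀, mem_filter.2 ⟨hx₀, hx₀v⟩⟩
    have hdim : D ≤ D' + 1 := by rw [hD, hinsert]; exact finrank_vectorSpan_insert_le_set k _ v
    calc (D + 2) * #X = #F * (D + 1) + #X + (D + 1) * #X' := by rw [← hcard]; ring
      _ ≤ #F * (D + 1) + #X + (D' + 2) * #X' := by
        gcongr _ + ?_ * _
        omega
      _ ≤ 2 * #(X + X) := by linarith

end LinearOrder

theorem finrank_span_le_finrank_vectorSpan_add_one (k : Type*) {V : Type*} [DivisionRing k]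
    [AddCommGroup V] [Module k V] (s : Set V) :
    finrank k (Submodule.span k s) ≤ finrank k (vectorSpan k s) + 1 := by
  have hspan : vectorSpan k (insert 0 s) = Submodule.span k s := by
    simp [vectorSpan_eq_span_vsub_set_right k (Set.mem_insert 0 s)]
  exact hspan ▸ finrank_vectorSpan_insert_le_set k s 0

theorem exists_linearOrder_isOrderedAddMonoid (k V : Type*) [Field k] [LinearOrder k]
    [IsStrictOrderedRing k] [AddCommGroup V] [Module k V] [FiniteDimensional k V] :
    ∃ _ : LinearOrder V, IsOrderedAddMonoid V := by
  let e : V ≃ₗ[k] Lex (Fin (finrank k V) → k) := (finBasis k V).equivFun ≪≫ₗ toLexLinearEquiv k _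
  let := LinearOrder.lift' e e.injective
  exact ⟨this, Function.Injective.isOrderedAddMonoid e (map_add e) .rfl⟩

theorem finrank_tensorProduct_of_isFractionRing (R K M : Type*) [CommRing R] [Field K]
    [Algebra R K] [IsFractionRing R K] [AddCommGroup M] [Module R M] :
    finrank K (K ⊗[R] M) = finrank R M :=
  (IsFractionRing.finrank_right_eq R K _).trans
    (IsLocalizedModule.finrank_eq (nonZeroDivisors R) (TensorProduct.mk R K M 1) le_rfl)

theorem finrank_int_add_one_mul_card_le {G : Type*} [AddCommGroup G] [DecidableEq G]
    {X : Finset G} (hgen : AddSubgroup.closure (X : Set G) = ⊤) :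
    (finrank ℤ G + 1) * #X ≤ 2 * #(X + X) := by
  have hspan : Submodule.span ℤ (X : Set G) = ⊤ := by
    rwa [← Submodule.toAddSubgroup_inj, Submodule.span_int_eq_addSubgroupClosure]
  have : Module.Finite ℤ G := ⟨X, hspan⟩
  obtain ⟨_, _⟩ := exists_linearOrder_isOrderedAddMonoid ℚ (ℚ ⊗[ℤ] G)
  let f := TensorProduct.mk ℤ ℚ G 1
  have htop : Submodule.span ℚ (f '' X) = ⊤ := by
    rw [← Submodule.baseChange_span, hspan, Submodule.baseChange_top]
  calc (finrank ℤ G + 1) * #X = (finrank ℚ (Submodule.span ℚ (f '' X)) + 1) * #X := by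
        rw [htop, finrank_top, finrank_tensorProduct_of_isFractionRing]
    _ ≤ (finrank ℚ (vectorSpan ℚ (f '' X)) + 2) * #X := by
        have := finrank_span_le_finrank_vectorSpan_add_one ℚ (f '' X)
        gcongr ?_ * #X
        omega
    _ ≤ 2 * #(X + X) := by
        have := finrank_vectorSpan_image_add_two_mul_card_le ℚ f.toAddMonoidHom X
        rwa [coe_image] at this

theorem stmt7_general {G : Type*} [AddCommGroup G] [DecidableEq G] {X : Finset G}
    (hX : X.Nonempty) (hgen : AddSubgroup.closure (X : Set G) = ⊤) {K : ℝ}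
    (hXX : (#(X + X) : ℝ) ≤ K * #X) : (finrank ℤ G : ℝ) + 1 ≤ 2 * K := by
  have hcard : (0 : ℝ) < #X := mod_cast hX.card_pos
  refine le_of_mul_le_mul_right ?_ hcard
  calc ((finrank ℤ G : ℝ) + 1) * #X
      ≤ 2 * #(X + X) := mod_cast finrank_int_add_one_mul_card_le hgen
    _ ≤ 2 * K * #X := by linarith

theorem le_finrank_zmod_prod_pi_int (d N : ℕ) : d ≤ finrank ℤ (ZMod N × (Fin d → ℤ)) := by
  have : Module.Finite ℤ (ZMod N) :=
    .of_surjective (Int.castAddHom (ZMod N)).toIntLinearMap ZMod.intCast_surjective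
  simpa using LinearMap.finrank_le_finrank_of_injective
    (LinearMap.inr_injective (R := ℤ) (M := ZMod N) (M₂ := Fin d → ℤ))

theorem stmt7 (d N : ℕ) (hN : 0 < N) (X : Finset (ZMod N × (Fin d → ℤ)))
    (h0 : (0 : ZMod N × (Fin d → ℤ)) ∈ X)
    (hgen : AddSubgroup.closure (X : Set (ZMod N × (Fin d → ℤ))) = ⊤)
    (K : ℝ) (hK : 1 ≤ K)
    (hXX : ((X + X).card : ℝ) ≤ K * (X.card : ℝ)) :
    (d : ℝ) ≤ 16 * K := by
  have hd : (d : ℝ) ≤ finrank ℤ (ZMod N × (Fin d → ℤ)) := mod_cast le_finrank_zmod_prod_pi_int d N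
  linarith [stmt7_general ⟨0, h0⟩ hgen hXX]
end

section
/- Let n, d be natural numbers, let F ∈ ℂ[x₁,…,xₙ] be a non-constant polynomial with total degree d, and let A ⊆ ℂ be a finite non-empty set. Then |F(A,…,A)| ≥ |A|/d. -/
open MvPolynomial

open scoped Classical

/-!
Let `B` be the set of values of `F` on a grid `∏ i, S i`. The polynomial `∏ v ∈ B, (F - v)` is
nonzero because `F` is not constant, it vanishes on the whole grid, and its degree in the `i`-th
variable is at most `|B| * degᵢ F`. By the Combinatorial Nullstellensatz these degrees cannot all
be smaller than the sides `|S i|` of the grid.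
-/

section ProdSubC

variable {σ R : Type*} [CommRing R]

theorem degreeOf_sub_C_le (i : σ) (F : MvPolynomial σ R) (v : R) :
    (F - C v).degreeOf i ≤ F.degreeOf i := by
  simpa only [degreeOf_C, Nat.max_zero] using degreeOf_sub_le i F (C v)

theorem degreeOf_prod_sub_C_le (i : σ) (F : MvPolynomial σ R) (B : Finset R) :
    (∏ v ∈ B, (F - C v)).degreeOf i ≤ B.card * F.degreeOf i :=
  calc (∏ v ∈ B, (F - C v)).degreeOf i
      ≤ ∑ v ∈ B, (F - C v).degreeOf i := degreeOf_prod_le i B _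
    _ ≤ B.card * F.degreeOf i :=
      Finset.sum_le_card_nsmul B _ _ fun v _ => degreeOf_sub_C_le i F v

theorem eval_prod_sub_C_eq_zero {F : MvPolynomial σ R} {B : Finset R} {a : σ → R}
    (ha : eval a F ∈ B) : eval a (∏ v ∈ B, (F - C v)) = 0 := by
  rw [eval_prod]
  exact Finset.prod_eq_zero ha (by rw [map_sub, eval_C, sub_self])

theorem prod_sub_C_ne_zero [IsDomain R] {F : MvPolynomial σ R} (hF : ∀ c : R, F ≠ C c)
    (B : Finset R) : ∏ v ∈ B, (F - C v) ≠ 0 :=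
  Finset.prod_ne_zero_iff.mpr fun v _ => sub_ne_zero.mpr (hF v)

end ProdSubC

theorem stmt10_general {σ R : Type*} [Fintype σ] [DecidableEq σ] [CommRing R] [IsDomain R]
    [DecidableEq R] (F : MvPolynomial σ R) (hF : ∀ c : R, F ≠ C c) (S : σ → Finset R) :
    ∃ i, (S i).card ≤ ((Fintype.piFinset S).image fun a => eval a F).card * F.degreeOf i := by
  set B := (Fintype.piFinset S).image fun a => eval a F
  by_contra! hlt
  have hvanish (a : σ → R) (ha : ∀ i, a i ∈ S i) : eval a (∏ v ∈ B, (F - C v)) = 0 :=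
    eval_prod_sub_C_eq_zero (Finset.mem_image_of_mem _ (Fintype.mem_piFinset.mpr ha))
  exact prod_sub_C_ne_zero hF B <| eq_zero_of_eval_zero_at_prod_finset _ S
    (fun i => (degreeOf_prod_sub_C_le i F B).trans_lt (hlt i)) hvanish

theorem stmt10 (n d : ℕ) (F : MvPolynomial (Fin n) ℂ) (hd : F.totalDegree = d)
    (hnonconst : ∀ c : ℂ, F ≠ C c) (A : Finset ℂ) (hA : A.Nonempty) :
    (A.card : ℝ) / (d : ℝ) ≤ ((polyImage F A).card : ℝ) := by
  obtain ⟨i, hi⟩ := stmt10_general F hnonconst fun _ => A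
  exact div_le_of_le_mul₀ d.cast_nonneg (Nat.cast_nonneg _) <| mod_cast
    hi.trans (Nat.mul_le_mul_left _ (hd ▸ degreeOf_le_totalDegree F i))
end

section
/- Let n be a natural number, let A ⊆ ℂ∖{0} be a finite non-empty set with |A·A| ≤ K|A| for some real K ≥ 1, and let r₁,…,rₙ ∈ ℤ. Then |{a₁^{r₁} ⋯ aₙ^{rₙ} : a₁,…,aₙ ∈ A}| ≤ K^{|r₁|+…+|rₙ|} · |A|. -/
open Pointwise

open scoped Classical

/-!
Since `0 ∉ A`, the set `A` lies in the group `ℂˣ`. Separating the positive exponents from the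
negative ones puts every product `a₁ ^ r₁ ⋯ aₙ ^ rₙ` in `A ^ p / A ^ q`, where `p` is the sum of the
positive parts of the `rᵢ` and `q` the sum of their negative parts. As `p + q = |r₁| + ⋯ + |rₙ|`,
the bound is the Plünnecke–Ruzsa inequality for `A ^ p / A ^ q`.
-/

theorem zpow_mem_pow_div_pow {G : Type*} [Group G] [DecidableEq G]
    {B : Finset G} {b : G} (hb : b ∈ B) (k : ℤ) : b ^ k ∈ B ^ k.toNat / B ^ (-k).toNat := by
  have split_exponent : b ^ k = b ^ k.toNat / b ^ (-k).toNat := by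
    rw [← zpow_natCast, ← zpow_natCast, div_eq_mul_inv, ← zpow_sub, Int.toNat_sub_toNat_neg]
  rw [split_exponent]
  exact Finset.div_mem_div (Finset.pow_mem_pow hb) (Finset.pow_mem_pow hb)

section CommGroup

variable {ι G 𝕜 : Type*} [Fintype ι] [CommGroup G] [DecidableEq G]
  [Semifield 𝕜] [LinearOrder 𝕜] [IsStrictOrderedRing 𝕜]

theorem prod_zpow_mem_pow_div_pow {B : Finset G} {b : ι → G}
    (hb : ∀ i, b i ∈ B) (r : ι → ℤ) :
    ∏ i, b i ^ r i ∈ B ^ (∑ i, (r i).toNat) / B ^ (∑ i, (-r i).toNat) := by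
  rw [← Finset.prod_pow_eq_pow_sum, ← Finset.prod_pow_eq_pow_sum, ← Finset.prod_div_distrib,
    ← Finset.mem_coe, Finset.coe_prod]
  exact Set.finsetProd_mem_finsetProd _ _ _ fun i _ ↦ zpow_mem_pow_div_pow (hb i) (r i)

theorem card_pow_div_pow_le_of_card_mul_le {A B : Finset G} (hA : A.Nonempty) {K : 𝕜}
    (hAB : ((A * B).card : 𝕜) ≤ K * A.card) (p q : ℕ) :
    ((B ^ p / B ^ q).card : 𝕜) ≤ K ^ (p + q) * A.card := by
  have card_pos : (0 : 𝕜) < A.card := by exact_mod_cast hA.card_pos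
  calc ((B ^ p / B ^ q).card : 𝕜)
      ≤ ((A * B).card / A.card) ^ (p + q) * A.card := by
        simpa using (NNRat.cast_le (K := 𝕜)).2 <|
          Finset.pluennecke_ruzsa_inequality_pow_div_pow_mul hA B p q
    _ ≤ K ^ (p + q) * A.card := by
        gcongr
        exact (div_le_iff₀ card_pos).2 hAB

theorem card_image_prod_zpow_le_of_card_mul_le [DecidableEq ι] {A B : Finset G} (hA : A.Nonempty)
    {K : 𝕜} (hAB : ((A * B).card : 𝕜) ≤ K * A.card) (r : ι → ℤ) :
    (((Fintype.piFinset fun _ : ι ↦ B).image fun b ↦ ∏ i, b i ^ r i).card : 𝕜)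
      ≤ K ^ (∑ i, (r i).natAbs) * A.card := by
  have image_subset : ((Fintype.piFinset fun _ : ι ↦ B).image fun b ↦ ∏ i, b i ^ r i) ⊆
      B ^ (∑ i, (r i).toNat) / B ^ (∑ i, (-r i).toNat) :=
    Finset.image_subset_iff.2 fun _ hb ↦
      prod_zpow_mem_pow_div_pow (Fintype.mem_piFinset.1 hb) r
  have sum_natAbs : ∑ i, (r i).natAbs = ∑ i, (r i).toNat + ∑ i, (-r i).toNat := by
    simp only [← Finset.sum_add_distrib, Int.toNat_add_toNat_neg_eq_natAbs]
  rw [sum_natAbs]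
  exact (Nat.cast_le.2 (Finset.card_le_card image_subset)).trans
    (card_pow_div_pow_le_of_card_mul_le hA hAB _ _)

end CommGroup

section CommGroupWithZero

variable {ι G₀ 𝕜 : Type*} [Fintype ι] [DecidableEq ι] [CommGroupWithZero G₀] [DecidableEq G₀]
  [Semifield 𝕜] [LinearOrder 𝕜] [IsStrictOrderedRing 𝕜]

theorem image_prod_zpow_image_units_val (B : Finset G₀ˣ) (r : ι → ℤ) :
    ((Fintype.piFinset fun _ : ι ↦ B.image Units.val).image fun a ↦ ∏ i, a i ^ r i) =
      ((Fintype.piFinset fun _ : ι ↦ B).image fun b ↦ ∏ i, b i ^ r i).image Units.val := by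
  rw [Fintype.piFinset_image (fun _ : ι ↦ Units.val), Finset.image_image, Finset.image_image]
  simp only [Function.comp_def, Units.coe_prod, Units.val_zpow_eq_zpow_val]

theorem stmt16_general {A B : Finset G₀} (hA₀ : 0 ∉ A) (hB₀ : 0 ∉ B) (hA : A.Nonempty) {K : 𝕜}
    (hAB : ((A * B).card : 𝕜) ≤ K * A.card) (r : ι → ℤ) :
    (((Fintype.piFinset fun _ : ι ↦ B).image fun b ↦ ∏ i, b i ^ r i).card : 𝕜)
      ≤ K ^ (∑ i, (r i).natAbs) * A.card := by
  lift A to Finset G₀ˣ using fun a ha ↦ (ne_of_mem_of_not_mem ha hA₀).isUnit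
  lift B to Finset G₀ˣ using fun b hb ↦ (ne_of_mem_of_not_mem hb hB₀).isUnit
  have image_mul : A.image Units.val * B.image Units.val = (A * B).image Units.val :=
    (Finset.image_mul (Units.coeHom G₀)).symm
  rw [image_mul] at hAB
  rw [image_prod_zpow_image_units_val]
  simp only [Finset.card_image_of_injective _ Units.val_injective] at hAB ⊢
  exact card_image_prod_zpow_le_of_card_mul_le (Finset.image_nonempty.1 hA) hAB r

end CommGroupWithZero

theorem stmt16 (n : ℕ) (A : Finset ℂ) (h0 : (0 : ℂ) ∉ A) (hA : A.Nonempty)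
    (K : ℝ) (hK : 1 ≤ K) (hAA : ((A * A).card : ℝ) ≤ K * (A.card : ℝ))
    (r : Fin n → ℤ) :
    ((((Fintype.piFinset fun _ : Fin n => A).image fun a => ∏ i, a i ^ r i).card : ℝ))
      ≤ K ^ (∑ i, (r i).natAbs) * (A.card : ℝ) :=
  stmt16_general h0 h0 hA hAA r
end
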